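/- Equal rate of DynamicFL and FedSGD (Theorem 1, equivalence form): With the same learning rate η ∈ (0,1) and the same initial parameter θ_0 ∈ ℝ, the three-client DynamicFL parameter after r rounds of k high-frequency steps each equals the FedSGD parameter after k·r steps; that is, θ^{DynamicFL}_r = θ^{FedSGD}_{k·r} = θ* + (1−η)^{k·r}·(θ_0 − θ*), so the two algorithms have the same rate of convergence at the same number of system-wide steps. -/

import Mathlib

/-!
A gradient step of rate `η` on a quadratic loss with minimiser `c` is the homothety of centre `c`
and ratio `1 - η`. Homotheties with a common centre compose by multiplying their ratios, and
homotheties with a common ratio average to the homothety of that ratio about the averaged centre.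
Hence each group takes `k` homothety steps of ratio `1 - η` about its mean, and aggregation turns
these into one homothety of ratio `(1 - η) ^ k` about `θ*`; averaging the gradients in the same way,
a FedSGD step is the homothety of ratio `1 - η` about `θ*`.
-/

open AffineMap Finset
open scoped Gradient

section Homothety

variable {R V : Type*} [CommRing R] [AddCommGroup V] [Module R V]

lemma sub_smul_sub_eq_homothety (η : R) (c x : V) :
    x - η • (x - c) = homothety c (1 - η) x := by
  simp only [homothety_apply, vsub_eq_sub, vadd_eq_add]
  module

lemma eq_homothety_pow_of_forall_succ {P : Type*} [AddTorsor V P] {c : P} {q : R} {k : ℕ}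
    {x : ℕ → P} (hx : ∀ ℓ < k, x (ℓ + 1) = homothety c q (x ℓ)) :
    x k = homothety c (q ^ k) (x 0) := by
  induction k with
  | zero => simp
  | succ k ih =>
    rw [hx k k.lt_succ_self, ih fun ℓ hℓ => hx ℓ (hℓ.trans k.lt_succ_self), pow_succ',
      homothety_mul_apply]

variable {ι : Type*} {s : Finset ι} {w : ι → R}

lemma sum_smul_sub_of_sum_eq_one (hw : ∑ i ∈ s, w i = 1) (c : ι → V) (x : V) :
    ∑ i ∈ s, w i • (x - c i) = x - ∑ i ∈ s, w i • c i := by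
  simp only [smul_sub, sum_sub_distrib, ← sum_smul, hw, one_smul]

lemma sum_smul_homothety (hw : ∑ i ∈ s, w i = 1) (c : ι → V) (q : R) (x : V) :
    ∑ i ∈ s, w i • homothety (c i) q x = homothety (∑ i ∈ s, w i • c i) q x := by
  calc ∑ i ∈ s, w i • homothety (c i) q x
      = ∑ i ∈ s, (q • w i • (x - c i) + w i • c i) := by
        simp only [homothety_apply, vsub_eq_sub, vadd_eq_add, smul_add, smul_comm q]
    _ = homothety (∑ i ∈ s, w i • c i) q x := by
        rw [sum_add_distrib, ← smul_sum, sum_smul_sub_of_sum_eq_one hw, homothety_apply,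
          vsub_eq_sub, vadd_eq_add]

/-- `y t g` is the trajectory of group `g` during round `t`, `C g` its set of clients, and `c i` the
minimiser of the quadratic loss of client `i`. -/
lemma dynamicFL_eq_homothety (hw : ∑ g ∈ s, w g = 1) {κ : Type*} {C : ι → Finset κ}
    {v : ι → κ → R} (hv : ∀ g ∈ s, ∑ i ∈ C g, v g i = 1) {c : κ → V} {η : R} {k : ℕ}
    {x : ℕ → V} {y : ℕ → ι → ℕ → V} (hinit : ∀ t, ∀ g ∈ s, y t g 0 = x t)
    (hstep : ∀ t, ∀ g ∈ s, ∀ ℓ < k,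
      y t g (ℓ + 1) = ∑ i ∈ C g, v g i • (y t g ℓ - η • (y t g ℓ - c i)))
    (hagg : ∀ t, x (t + 1) = ∑ g ∈ s, w g • y t g k) (r : ℕ) :
    x r = homothety (∑ g ∈ s, w g • ∑ i ∈ C g, v g i • c i) ((1 - η) ^ (k * r)) (x 0) := by
  have hgroup (t : ℕ) (g : ι) (hg : g ∈ s) :
      y t g k = homothety (∑ i ∈ C g, v g i • c i) ((1 - η) ^ k) (x t) :=
    hinit t g hg ▸ eq_homothety_pow_of_forall_succ fun ℓ hℓ => by
      simp only [hstep t g hg ℓ hℓ, sub_smul_sub_eq_homothety, sum_smul_homothety (hv g hg)]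
  have hround (t : ℕ) : x (t + 1) =
      homothety (∑ g ∈ s, w g • ∑ i ∈ C g, v g i • c i) ((1 - η) ^ k) (x t) := by
    rw [hagg, ← sum_smul_homothety hw]
    exact sum_congr rfl fun g hg => by rw [hgroup t g hg]
  rw [pow_mul]
  exact eq_homothety_pow_of_forall_succ fun t _ => hround t

end Homothety

section QuadraticLoss

/-- The local empirical mean `z̄ = (1/n) ∑ z_j` of the observations `z 0, …, z (n - 1)` of a client;
it is `0` if `n = 0`. -/
noncomputable def empiricalMean {E : Type*} [AddCommGroup E] [Module ℝ E] (n : ℕ) (z : ℕ → E) : E :=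
  (n : ℝ)⁻¹ • ∑ j ∈ range n, z j

/-- The local loss `θ ↦ (1/n) ∑ ½‖θ - z_j‖²` of a client with observations `z 0, …, z (n - 1)`, for
parameters and data in a normed space; it is `0` if `n = 0`. -/
noncomputable def localLoss {E : Type*} [NormedAddCommGroup E] (n : ℕ) (z : ℕ → E)
    (θ : E) : ℝ :=
  (n : ℝ)⁻¹ * ∑ j ∈ range n, (1 / 2) * ‖θ - z j‖ ^ 2

variable {ι E : Type*} [NormedAddCommGroup E] [InnerProductSpace ℝ E] [CompleteSpace E]

lemma hasGradientAt_half_norm_sub_sq (c x : E) :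
    HasGradientAt (fun y => (1 / 2 : ℝ) * ‖y - c‖ ^ 2) (x - c) x := by
  rw [hasGradientAt_iff_hasFDerivAt]
  refine (((hasFDerivAt_id x).sub_const c).norm_sq.const_mul (1 / 2)).congr_fderiv ?_
  ext v
  simp

lemma hasGradientAt_sum_mul {s : Finset ι} {w : ι → ℝ} {f : ι → E → ℝ} {f' : ι → E} {x : E}
    (hf : ∀ i ∈ s, HasGradientAt (f i) (f' i) x) :
    HasGradientAt (fun y => ∑ i ∈ s, w i * f i y) (∑ i ∈ s, w i • f' i) x := by
  rw [hasGradientAt_iff_hasFDerivAt]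
  refine (HasFDerivAt.fun_sum fun i hi => (hf i hi).hasFDerivAt.const_mul (w i)).congr_fderiv ?_
  simp

lemma hasGradientAt_sum_mul_of_sum_eq_one {s : Finset ι} {w : ι → ℝ} (hw : ∑ i ∈ s, w i = 1)
    {f : ι → E → ℝ} {c : ι → E} {x : E} (hf : ∀ i ∈ s, HasGradientAt (f i) (x - c i) x) :
    HasGradientAt (fun y => ∑ i ∈ s, w i * f i y) (x - ∑ i ∈ s, w i • c i) x :=
  sum_smul_sub_of_sum_eq_one hw c x ▸ hasGradientAt_sum_mul hf

lemma hasGradientAt_localLoss {n : ℕ} (hn : 0 < n) (z : ℕ → E) (x : E) :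
    HasGradientAt (localLoss n z) (x - empiricalMean n z) x := by
  have hw : ∑ _j ∈ range n, (n : ℝ)⁻¹ = 1 := by simp [hn.ne']
  unfold localLoss empiricalMean
  simp only [mul_sum (a := (n : ℝ)⁻¹), smul_sum]
  exact hasGradientAt_sum_mul_of_sum_eq_one hw fun j _ => hasGradientAt_half_norm_sub_sq (z j) x

lemma fedSGD_eq_homothety {s : Finset ι} {w : ι → ℝ} (hw : ∑ i ∈ s, w i = 1) {n : ι → ℕ}
    (hn : ∀ i ∈ s, 0 < n i) {z : ι → ℕ → E} {L : E → ℝ}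
    (hL : ∀ y, L y = ∑ i ∈ s, w i * localLoss (n i) (z i) y) {η : ℝ} {x : ℕ → E}
    (hstep : ∀ ℓ, x (ℓ + 1) = x ℓ - η • ∇ L (x ℓ)) (ℓ : ℕ) :
    x ℓ = homothety (∑ i ∈ s, w i • empiricalMean (n i) (z i)) ((1 - η) ^ ℓ) (x 0) := by
  have hgrad (y : E) : ∇ L y = y - ∑ i ∈ s, w i • empiricalMean (n i) (z i) := by
    rw [funext hL]
    exact (hasGradientAt_sum_mul_of_sum_eq_one hw
      fun i hi => hasGradientAt_localLoss (hn i hi) (z i) y).gradient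
  exact eq_homothety_pow_of_forall_succ fun m _ => by
    rw [hstep, hgrad, sub_smul_sub_eq_homothety]

theorem dynamicFL_eq_fedSGD_general
    (n1 n2 n3 : ℕ) (hn1 : 0 < n1) (hn2 : 0 < n2) (hn3 : 0 < n3) (z1 z2 z3 : ℕ → E)
    (zbar1 zbar2 zbar3 : E) (hz1 : zbar1 = empiricalMean n1 z1)
    (hz2 : zbar2 = empiricalMean n2 z2) (hz3 : zbar3 = empiricalMean n3 z3)
    (θstar : E)
    (hθstar : θstar = ((n1 : ℝ) / (n1 + n2 + n3)) • zbar1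
        + ((n2 : ℝ) / (n1 + n2 + n3)) • zbar2
        + ((n3 : ℝ) / (n1 + n2 + n3)) • zbar3)
    (L : E → ℝ)
    (hL : ∀ θ : E, L θ = ((n1 : ℝ) / (n1 + n2 + n3)) * localLoss n1 z1 θ
        + ((n2 : ℝ) / (n1 + n2 + n3)) * localLoss n2 z2 θ
        + ((n3 : ℝ) / (n1 + n2 + n3)) * localLoss n3 z3 θ)
    (η : ℝ) (k : ℕ) (θ : ℕ → E) (θ12 θ3 : ℕ → ℕ → E)
    (h12init : ∀ t : ℕ, θ12 t 0 = θ t)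
    (h3init : ∀ t : ℕ, θ3 t 0 = θ t)
    (h12step : ∀ t : ℕ, ∀ ℓ < k,
        θ12 t (ℓ + 1) =
          ((n1 : ℝ) / (n1 + n2)) • (θ12 t ℓ - η • (θ12 t ℓ - zbar1))
          + ((n2 : ℝ) / (n1 + n2)) • (θ12 t ℓ - η • (θ12 t ℓ - zbar2)))
    (h3step : ∀ t : ℕ, ∀ ℓ < k, θ3 t (ℓ + 1) = θ3 t ℓ - η • (θ3 t ℓ - zbar3))
    (hagg : ∀ t : ℕ,
        θ (t + 1) = (((n1 : ℝ) + n2) / (n1 + n2 + n3)) • θ12 t k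
          + ((n3 : ℝ) / (n1 + n2 + n3)) • θ3 t k)
    (θf : ℕ → E) (hinit : θf 0 = θ 0)
    (hfstep : ∀ ℓ : ℕ, θf (ℓ + 1) = θf ℓ - η • ∇ L (θf ℓ)) (r : ℕ) :
    θ r = θf (k * r) ∧ θf (k * r) = θstar + (1 - η) ^ (k * r) • (θ 0 - θstar) := by
  have hN12 : (n1 : ℝ) + n2 ≠ 0 := by positivity
  have hN : (n1 : ℝ) + n2 + n3 ≠ 0 := by positivity
  have hfed : θf (k * r) = homothety θstar ((1 - η) ^ (k * r)) (θ 0) := by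
    have h := fedSGD_eq_homothety (s := univ) (n := ![n1, n2, n3]) (z := ![z1, z2, z3])
      (w := fun i => (![n1, n2, n3] i : ℝ) / (n1 + n2 + n3))
      (by simp [Fin.sum_univ_three, ← add_div, hN])
      (by simp [Fin.forall_fin_succ, hn1, hn2, hn3])
      (by simpa [Fin.sum_univ_three] using hL) hfstep (k * r)
    simpa [Fin.sum_univ_three, ← hz1, ← hz2, ← hz3, ← hθstar, hinit] using h
  have hcenter : ((n1 + n2 : ℝ) / (n1 + n2 + n3)) •
      (((n1 : ℝ) / (n1 + n2)) • zbar1 + ((n2 : ℝ) / (n1 + n2)) • zbar2)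
        + ((n3 : ℝ) / (n1 + n2 + n3)) • zbar3 = θstar := by
    rw [hθstar, smul_add, smul_smul, smul_smul, div_mul_div_cancel₀' hN12,
      div_mul_div_cancel₀' hN12]
  have hdyn : θ r = homothety θstar ((1 - η) ^ (k * r)) (θ 0) := by
    have h := dynamicFL_eq_homothety (s := univ) (x := θ) (y := fun t => ![θ12 t, θ3 t])
      (w := ![((n1 : ℝ) + n2) / (n1 + n2 + n3), (n3 : ℝ) / (n1 + n2 + n3)])
      (C := ![{0, 1}, {2}]) (v := ![![(n1 : ℝ) / (n1 + n2), n2 / (n1 + n2), 0], ![0, 0, 1]])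
      (c := ![zbar1, zbar2, zbar3])
      (by simp [← add_div, hN]) (by simp [← add_div, hN12])
      (by simp [h12init, h3init])
      (by simpa [forall_and] using ⟨h12step, h3step⟩)
      (by simpa using hagg) r
    simpa [-smul_add, hcenter] using h
  refine ⟨hdyn.trans hfed.symm, ?_⟩
  rw [hfed, homothety_apply, vsub_eq_sub, vadd_eq_add, add_comm]

end QuadraticLoss

/-- **Equal rate of DynamicFL and FedSGD (Theorem 1, equivalence form).**
With the same learning rate `η ∈ (0,1)` and the same initial parameter,
the DynamicFL parameter after `r` rounds of `k` high-frequency steps equals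
the FedSGD parameter after `k·r` steps, and both equal
`θ* + (1−η)^(k·r) (θ_0 − θ*)`. -/
theorem dynamicFL_eq_fedSGD
    (n1 n2 n3 : ℕ) (hn1 : 1 ≤ n1) (hn2 : 1 ≤ n2) (hn3 : 1 ≤ n3)
    (z1 z2 z3 : ℕ → ℝ)
    (zbar1 zbar2 zbar3 : ℝ)
    (hz1 : zbar1 = (∑ j ∈ Finset.range n1, z1 j) / n1)
    (hz2 : zbar2 = (∑ j ∈ Finset.range n2, z2 j) / n2)
    (hz3 : zbar3 = (∑ j ∈ Finset.range n3, z3 j) / n3)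
    (θstar : ℝ)
    (hθstar : θstar = ((n1 : ℝ) / (n1 + n2 + n3)) * zbar1
        + ((n2 : ℝ) / (n1 + n2 + n3)) * zbar2
        + ((n3 : ℝ) / (n1 + n2 + n3)) * zbar3)
    (L1 L2 L3 L : ℝ → ℝ)
    (hL1 : ∀ θ : ℝ, L1 θ = (1 / (n1 : ℝ)) * ∑ j ∈ Finset.range n1, (1 / 2) * (θ - z1 j) ^ 2)
    (hL2 : ∀ θ : ℝ, L2 θ = (1 / (n2 : ℝ)) * ∑ j ∈ Finset.range n2, (1 / 2) * (θ - z2 j) ^ 2)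
    (hL3 : ∀ θ : ℝ, L3 θ = (1 / (n3 : ℝ)) * ∑ j ∈ Finset.range n3, (1 / 2) * (θ - z3 j) ^ 2)
    (hL : ∀ θ : ℝ, L θ = ((n1 : ℝ) / (n1 + n2 + n3)) * L1 θ
        + ((n2 : ℝ) / (n1 + n2 + n3)) * L2 θ
        + ((n3 : ℝ) / (n1 + n2 + n3)) * L3 θ)
    (η : ℝ) (hη0 : 0 < η) (hη1 : η < 1)
    (k : ℕ) (hk : 1 ≤ k)
    -- DynamicFL iteration
    (θ : ℕ → ℝ)
    (θ12 θ3 : ℕ → ℕ → ℝ)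
    (h12init : ∀ t : ℕ, θ12 t 0 = θ t)
    (h3init : ∀ t : ℕ, θ3 t 0 = θ t)
    (h12step : ∀ t : ℕ, ∀ ℓ < k,
        θ12 t (ℓ + 1) =
          ((n1 : ℝ) / (n1 + n2)) * (θ12 t ℓ - η * (θ12 t ℓ - zbar1))
          + ((n2 : ℝ) / (n1 + n2)) * (θ12 t ℓ - η * (θ12 t ℓ - zbar2)))
    (h3step : ∀ t : ℕ, ∀ ℓ < k,
        θ3 t (ℓ + 1) = θ3 t ℓ - η * (θ3 t ℓ - zbar3))
    (hagg : ∀ t : ℕ,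
        θ (t + 1) = (((n1 : ℝ) + n2) / (n1 + n2 + n3)) * θ12 t k
          + ((n3 : ℝ) / (n1 + n2 + n3)) * θ3 t k)
    -- FedSGD iteration with the same initial parameter
    (θf : ℕ → ℝ)
    (hinit : θf 0 = θ 0)
    (hfstep : ∀ ℓ : ℕ, θf (ℓ + 1) = θf ℓ - η * deriv L (θf ℓ)) :
    ∀ r : ℕ, θ r = θf (k * r) ∧
      θf (k * r) = θstar + (1 - η) ^ (k * r) * (θ 0 - θstar) :=
  dynamicFL_eq_fedSGD_general n1 n2 n3 hn1 hn2 hn3 z1 z2 z3 zbar1 zbar2 zbar3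
    (hz1.trans (div_eq_inv_mul _ _)) (hz2.trans (div_eq_inv_mul _ _))
    (hz3.trans (div_eq_inv_mul _ _)) θstar hθstar L (by simp [hL, hL1, hL2, hL3, localLoss])
    η k θ θ12 θ3 h12init h3init h12step h3step hagg θf hinit
    (by simpa only [gradient_eq_deriv', smul_eq_mul] using hfstep)
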